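/- arXiv:1801.08775 — 4 statements merged into one kernel-verified Lean document; each statement's English description precedes it below -/
import Mathlib

section
/- Every expansive homeomorphism f : M → M of a compact metric space (M, ρ) admits a compatible metric d (i.e. a metric inducing the same topology as ρ) which is self-similar for f: there exist constants ξ > 0 and λ > 1 such that whenever d(p,q) ≤ ξ one has max{d(f(p),f(q)), d(f⁻¹(p),f⁻¹(q))} = λ·d(p,q). -/
open Filter Topology

/-!
Write `G_u(x, y)` for the supremum of `u ^ |n|` over the times `n` at which the iterates of `x` and
`y` are not `V`-close, so that `G_u = u ^ N` with `N` the first separation time. Compactness makes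
expansivity uniform: staying close up to some time `k` forces a closeness that survives two triangle
inequalities, and so `G_v` is a quasi-metric with constant `v ^ (-k)`. For `v ^ k = 1 / 2`, Frink's
metrization lemma gives a metric `D` with `D ≤ G_v ≤ 2 D`.

Put `u = √v` and `S(x, y) = sup_n u ^ |n| D(fⁿ x, fⁿ y)`. The weights make `f` and `f⁻¹` at most
`u⁻¹`-expanding for `S`, and one of them attains `u⁻¹` as soon as the supremum is not carried by the
term `n = 0` alone. When `x` and `y` are close, one of the shifts by `± 2k` multiplies `G_v` by
`v ^ (-2k) = 4`, hence `D` by at least `2`, while the weight costs only `u ^ (2k) = 1 / 2`: the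
supremum over `n ≠ 0` is already `S`. This slack is the reason for weighting with `u` rather than
`v`. Finally `D ≤ S ≤ G_u`, so `S` separates points and is continuous on the compact space.
-/

open scoped NNReal Uniformity

section OrbitSup

variable {X : Type*}

/-- The supremum of `D` along the orbits of `x` and `y`, discounted by the factor `u` per unit of
time in either direction. It is meant for bounded `D` and `u ≤ 1`; for an unbounded family the
supremum in `ℝ≥0` is `0`. -/
noncomputable def orbitSup (f : Equiv.Perm X) (u : ℝ≥0) (D : X → X → ℝ≥0) (x y : X) : ℝ≥0 :=
  ⨆ n : ℤ, u ^ n.natAbs * D ((f ^ n) x) ((f ^ n) y)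

variable {f : Equiv.Perm X} {u v a b C : ℝ≥0} {D D' : X → X → ℝ≥0} {x y : X}

theorem orbitSup_self (hD : ∀ x, D x x = 0) (x : X) : orbitSup f u D x x = 0 := by
  simp [orbitSup, hD]

theorem orbitSup_comm (hD : ∀ x y, D x y = D y x) (x y : X) :
    orbitSup f u D x y = orbitSup f u D y x :=
  iSup_congr fun _ => by rw [hD]

theorem orbitSup_le (h : ∀ n : ℤ, u ^ n.natAbs * D ((f ^ n) x) ((f ^ n) y) ≤ b) :
    orbitSup f u D x y ≤ b :=
  ciSup_le' h

theorem mul_orbitSup_le (h : ∀ n : ℤ, a * (u ^ n.natAbs * D ((f ^ n) x) ((f ^ n) y)) ≤ b) :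
    a * orbitSup f u D x y ≤ b := by
  rw [orbitSup, NNReal.mul_iSup]
  exact ciSup_le' h

theorem pow_mul_le_orbitSup (hu : u ≤ 1) (hD : ∀ x y, D x y ≤ C) (n : ℤ) :
    u ^ n.natAbs * D ((f ^ n) x) ((f ^ n) y) ≤ orbitSup f u D x y := by
  refine le_ciSup (f := fun n : ℤ => u ^ n.natAbs * D ((f ^ n) x) ((f ^ n) y)) ⟨C, ?_⟩ n
  rintro _ ⟨j, rfl⟩
  exact mul_le_of_le_one_of_le (pow_le_one' hu _) (hD _ _)

theorem le_orbitSup (hu : u ≤ 1) (hD : ∀ x y, D x y ≤ C) (x y : X) :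
    D x y ≤ orbitSup f u D x y := by
  simpa using pow_mul_le_orbitSup (f := f) (x := x) (y := y) hu hD 0

theorem orbitSup_mono (hu : u ≤ 1) (hD' : ∀ x y, D' x y ≤ C) (h : ∀ x y, D x y ≤ D' x y)
    (x y : X) : orbitSup f u D x y ≤ orbitSup f u D' x y :=
  orbitSup_le fun n => (mul_le_mul_right (h _ _) _).trans (pow_mul_le_orbitSup hu hD' n)

theorem orbitSup_triangle (hu : u ≤ 1) (hD : ∀ x y, D x y ≤ C)
    (htri : ∀ x y z, D x z ≤ D x y + D y z) (x y z : X) :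
    orbitSup f u D x z ≤ orbitSup f u D x y + orbitSup f u D y z :=
  orbitSup_le fun n => calc
    u ^ n.natAbs * D ((f ^ n) x) ((f ^ n) z)
      ≤ u ^ n.natAbs * D ((f ^ n) x) ((f ^ n) y) + u ^ n.natAbs * D ((f ^ n) y) ((f ^ n) z) := by
        rw [← mul_add]
        exact mul_le_mul_right (htri _ _ _) _
    _ ≤ _ := add_le_add (pow_mul_le_orbitSup hu hD n) (pow_mul_le_orbitSup hu hD n)

theorem pow_mul_orbitSup_zpow_le (hu : u ≤ 1) (hvu : v ≤ u) (hD : ∀ x y, D x y ≤ C) (n : ℤ) :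
    u ^ n.natAbs * orbitSup f v D ((f ^ n) x) ((f ^ n) y) ≤ orbitSup f u D x y := by
  refine mul_orbitSup_le fun j => ?_
  calc u ^ n.natAbs * (v ^ j.natAbs * D ((f ^ j) ((f ^ n) x)) ((f ^ j) ((f ^ n) y)))
      ≤ u ^ n.natAbs * (u ^ j.natAbs * D ((f ^ j) ((f ^ n) x)) ((f ^ j) ((f ^ n) y))) := by gcongr
    _ = u ^ (n.natAbs + j.natAbs) * D ((f ^ (j + n)) x) ((f ^ (j + n)) y) := by
        simp only [pow_add, mul_assoc, zpow_add, Equiv.Perm.mul_apply]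
    _ ≤ u ^ (j + n).natAbs * D ((f ^ (j + n)) x) ((f ^ (j + n)) y) :=
        mul_le_mul_left (pow_le_pow_right_of_le_one' hu (by omega)) _
    _ ≤ orbitSup f u D x y := pow_mul_le_orbitSup hu hD _

theorem orbitSup_orbitSup_le (hu : u ≤ 1) (hvu : v ≤ u) (hD : ∀ x y, D x y ≤ C) (x y : X) :
    orbitSup f u (orbitSup f v D) x y ≤ orbitSup f u D x y :=
  orbitSup_le fun n => pow_mul_orbitSup_zpow_le hu hvu hD n

theorem pow_mul_le_mul_max_orbitSup (hu : u ≤ 1) (hD : ∀ x y, D x y ≤ C) {n : ℤ} (hn : n ≠ 0) :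
    u ^ n.natAbs * D ((f ^ n) x) ((f ^ n) y) ≤
      u * max (orbitSup f u D (f x) (f y)) (orbitSup f u D (f.symm x) (f.symm y)) := by
  rcases hn.lt_or_gt with hneg | hpos
  · have hshift (z : X) : (f ^ n) z = (f ^ (n + 1)) (f.symm z) := by simp [zpow_add_one]
    rw [hshift, hshift, show n.natAbs = (n + 1).natAbs + 1 by omega, pow_succ', mul_assoc]
    gcongr
    exact (pow_mul_le_orbitSup hu hD _).trans (le_max_right _ _)
  · have hshift (z : X) : (f ^ n) z = (f ^ (n - 1)) (f z) := by simp [zpow_sub_one]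
    rw [hshift, hshift, show n.natAbs = (n - 1).natAbs + 1 by omega, pow_succ', mul_assoc]
    gcongr
    exact (pow_mul_le_orbitSup hu hD _).trans (le_max_left _ _)

theorem max_orbitSup_eq_inv_mul (hu₀ : u ≠ 0) (hu : u ≤ 1) (hD : ∀ x y, D x y ≤ C)
    (h : ∃ n : ℤ, n ≠ 0 ∧ D x y ≤ u ^ n.natAbs * D ((f ^ n) x) ((f ^ n) y)) :
    max (orbitSup f u D (f x) (f y)) (orbitSup f u D (f.symm x) (f.symm y)) =
      u⁻¹ * orbitSup f u D x y := by
  rw [eq_inv_mul_iff_mul_eq₀ hu₀]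
  apply le_antisymm
  · rw [mul_max_of_nonneg _ _ zero_le]
    exact max_le (by simpa using pow_mul_orbitSup_zpow_le (f := f) hu le_rfl hD 1)
      (by simpa using pow_mul_orbitSup_zpow_le (f := f) hu le_rfl hD (-1))
  · refine orbitSup_le fun j => ?_
    rcases eq_or_ne j 0 with rfl | hj
    · obtain ⟨n, hn, hle⟩ := h
      simpa using hle.trans (pow_mul_le_mul_max_orbitSup hu hD hn)
    · exact pow_mul_le_mul_max_orbitSup hu hD hj

end OrbitSup

section SeparationGauge

variable {X : Type*}

/-- For `u ≤ 1`, the gauge `u ^ N`, where `N` is the least `|n|` such that the iterates `fⁿ x` and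
`fⁿ y` are not `V`-close; it is `0` if there is no such `n`. -/
noncomputable def separationGauge (f : Equiv.Perm X) (V : Set (X × X)) (u : ℝ≥0) :
    X → X → ℝ≥0 :=
  orbitSup f u fun x y => Vᶜ.indicator 1 (x, y)

variable {f : Equiv.Perm X} {V : Set (X × X)} {u b : ℝ≥0} {x y : X}

theorem indicator_compl_one_le_one (V : Set (X × X)) (x y : X) :
    Vᶜ.indicator (1 : X × X → ℝ≥0) (x, y) ≤ 1 :=
  Set.indicator_le' (fun _ _ => le_rfl) (fun _ _ => zero_le_one) _

theorem separationGauge_le_iff (hu : u ≤ 1) :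
    separationGauge f V u x y ≤ b ↔ ∀ n : ℤ, ((f ^ n) x, (f ^ n) y) ∉ V → u ^ n.natAbs ≤ b := by
  refine ⟨fun h n hn => ?_, fun h => orbitSup_le fun n => ?_⟩
  · have hle := pow_mul_le_orbitSup (f := f) (x := x) (y := y) hu (indicator_compl_one_le_one V) n
    rw [Set.indicator_of_mem hn, Pi.one_apply, mul_one] at hle
    exact hle.trans h
  · by_cases hn : ((f ^ n) x, (f ^ n) y) ∈ V
    · simp [hn]
    · simpa [hn] using h n hn

theorem pow_le_separationGauge (hu : u ≤ 1) {n : ℤ} (hn : ((f ^ n) x, (f ^ n) y) ∉ V) :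
    u ^ n.natAbs ≤ separationGauge f V u x y :=
  (separationGauge_le_iff hu).1 le_rfl n hn

theorem separationGauge_le_one (hu : u ≤ 1) (x y : X) : separationGauge f V u x y ≤ 1 :=
  (separationGauge_le_iff hu).2 fun _ _ => pow_le_one' hu _

theorem separationGauge_self (hV : ∀ x, (x, x) ∈ V) (x : X) : separationGauge f V u x x = 0 :=
  orbitSup_self (fun x => by simp [hV x]) x

theorem separationGauge_comm (hV : ∀ x y, (x, y) ∈ V → (y, x) ∈ V) (x y : X) :
    separationGauge f V u x y = separationGauge f V u y x := by
  classical
  refine orbitSup_comm (fun x y => ?_) x y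
  simp only [Set.indicator_apply, Set.mem_compl_iff, (⟨hV x y, hV y x⟩ : _ ↔ _), Pi.one_apply]

theorem eq_of_separationGauge_eq_zero (hu₀ : u ≠ 0) (hu : u ≤ 1)
    (hexp : ∀ x y, x ≠ y → ∃ n : ℤ, ((f ^ n) x, (f ^ n) y) ∉ V)
    (h : separationGauge f V u x y = 0) : x = y := by
  by_contra hne
  obtain ⟨n, hn⟩ := hexp x y hne
  exact (pow_pos hu₀.bot_lt _).not_ge (h ▸ pow_le_separationGauge hu hn)

theorem pow_mul_separationGauge_le_max (hu : u ≤ 1) {k : ℕ}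
    (hk : ∀ x y z w, (∀ i : ℤ, i.natAbs ≤ k → ((f ^ i) x, (f ^ i) y) ∈ V ∧
      ((f ^ i) y, (f ^ i) z) ∈ V ∧ ((f ^ i) z, (f ^ i) w) ∈ V) → (x, w) ∈ V)
    (x y z w : X) :
    u ^ k * separationGauge f V u x w ≤ max (separationGauge f V u x y)
      (max (separationGauge f V u y z) (separationGauge f V u z w)) := by
  refine mul_orbitSup_le fun j => ?_
  by_cases hj : ((f ^ j) x, (f ^ j) w) ∈ V
  · simp [hj]
  obtain ⟨i, hi, hsep⟩ : ∃ i : ℤ, i.natAbs ≤ k ∧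
      (((f ^ (i + j)) x, (f ^ (i + j)) y) ∈ V → ((f ^ (i + j)) y, (f ^ (i + j)) z) ∈ V →
        ((f ^ (i + j)) z, (f ^ (i + j)) w) ∉ V) := by
    by_contra! hclose
    refine hj (hk _ ((f ^ j) y) ((f ^ j) z) _ fun i hi => ?_)
    simpa only [zpow_add, Equiv.Perm.mul_apply] using hclose i hi
  have hpow : u ^ k * (u ^ j.natAbs * Vᶜ.indicator 1 ((f ^ j) x, (f ^ j) w)) ≤
      u ^ (i + j).natAbs := by
    rw [Set.indicator_of_mem hj, Pi.one_apply, mul_one, ← pow_add]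
    exact pow_le_pow_right_of_le_one' hu (by omega)
  refine hpow.trans ?_
  by_cases hxy : ((f ^ (i + j)) x, (f ^ (i + j)) y) ∈ V
  · by_cases hyz : ((f ^ (i + j)) y, (f ^ (i + j)) z) ∈ V
    · exact le_max_of_le_right (le_max_of_le_right (pow_le_separationGauge hu (hsep hxy hyz)))
    · exact le_max_of_le_right (le_max_of_le_left (pow_le_separationGauge hu hyz))
  · exact le_max_of_le_left (pow_le_separationGauge hu hxy)

theorem separationGauge_le_max_of_lt_pow (hu : u ≤ 1) {m : ℕ}
    (h : separationGauge f V u x y < u ^ m) :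
    separationGauge f V u x y ≤
      max (u ^ m * separationGauge f V u ((f ^ (m : ℤ)) x) ((f ^ (m : ℤ)) y))
        (u ^ m * separationGauge f V u ((f ^ (-m : ℤ)) x) ((f ^ (-m : ℤ)) y)) := by
  refine (separationGauge_le_iff hu).2 fun j hj => ?_
  have hmj : m < j.natAbs := by
    by_contra! hle
    exact ((pow_le_pow_right_of_le_one' hu hle).trans (pow_le_separationGauge hu hj)).not_gt h
  have hshift (i : ℤ) (hi : j.natAbs = m + (j - i).natAbs) :
      u ^ j.natAbs ≤ u ^ m * separationGauge f V u ((f ^ i) x) ((f ^ i) y) := by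
    rw [hi, pow_add]
    gcongr
    apply pow_le_separationGauge hu
    simpa only [← Equiv.Perm.mul_apply, ← zpow_add, sub_add_cancel] using hj
  rcases le_total 0 j with hpos | hneg
  · exact le_max_of_le_left (hshift m (by omega))
  · exact le_max_of_le_right (hshift (-m) (by omega))

end SeparationGauge

section SelfSimilarMetric

variable {X : Type*}

theorem exists_nnreal_pow_eq_of_lt_one {a : ℝ≥0} (ha₀ : a ≠ 0) (ha₁ : a < 1) {n : ℕ} (hn : n ≠ 0) :
    ∃ u : ℝ≥0, u ≠ 0 ∧ u < 1 ∧ u ^ n = a := by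
  have hroot : (a ^ ((n : ℝ)⁻¹)) ^ n = a := NNReal.rpow_inv_natCast_pow a hn
  refine ⟨_, fun h => ha₀ ?_, ?_, hroot⟩
  · rw [← hroot, h, zero_pow hn]
  · rwa [← pow_lt_one_iff hn, hroot]

theorem exists_pseudoMetricSpace_nndist_le (r : X → X → ℝ≥0) (hself : ∀ x, r x x = 0)
    (hcomm : ∀ x y, r x y = r y x)
    (hquasi : ∀ x y z w, r x w ≤ 2 * max (r x y) (max (r y z) (r z w))) :
    ∃ _ : PseudoMetricSpace X, ∀ x y : X, nndist x y ≤ r x y ∧ r x y ≤ 2 * nndist x y :=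
  ⟨.ofPreNNDist r hself hcomm, fun x y =>
    ⟨PseudoMetricSpace.dist_ofPreNNDist_le r hself hcomm x y,
      PseudoMetricSpace.le_two_mul_dist_ofPreNNDist r hself hcomm hquasi x y⟩⟩

theorem exists_metricSpace_nndist_eq_orbitSup [PseudoMetricSpace X] (f : Equiv.Perm X) {u C : ℝ≥0}
    (hu : u ≤ 1) (hC : ∀ x y : X, nndist x y ≤ C) (heq : ∀ x y : X, nndist x y = 0 → x = y) :
    ∃ m : MetricSpace X, ∀ x y, m.dist x y = orbitSup f u nndist x y :=
  ⟨{  dist x y := orbitSup f u nndist x y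
      dist_self x := by simp [orbitSup_self (D := nndist) nndist_self]
      dist_comm x y := by rw [orbitSup_comm nndist_comm]
      dist_triangle x y z := mod_cast orbitSup_triangle hu hC nndist_triangle x y z
      eq_of_dist_eq_zero {x y} h :=
        heq x y (nonpos_iff_eq_zero.1 ((le_orbitSup hu hC x y).trans_eq (mod_cast h))) },
    fun _ _ => rfl⟩

theorem exists_nndist_le_pow_mul_nndist_zpow [PseudoMetricSpace X] {f : Equiv.Perm X}
    {V : Set (X × X)} {u : ℝ≥0} (hu : u ≤ 1) {k : ℕ} (huk : u ^ (2 * k) = 1 / 2)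
    (hle : ∀ x y : X, nndist x y ≤ separationGauge f V (u ^ 2) x y)
    (hge : ∀ x y : X, separationGauge f V (u ^ 2) x y ≤ 2 * nndist x y)
    {p q : X} (hpq : nndist p q ≤ 1 / 16) :
    ∃ n : ℤ, n ≠ 0 ∧ nndist p q ≤ u ^ n.natAbs * nndist ((f ^ n) p) ((f ^ n) q) := by
  have hquarter : (u ^ 2) ^ (2 * k) = 1 / 4 := by
    rw [← pow_mul, mul_comm 2, pow_mul, huk]
    norm_num
  have hk : k ≠ 0 := by
    rintro rfl
    norm_num at huk
  have hsmall : separationGauge f V (u ^ 2) p q < (u ^ 2) ^ (2 * k) := calc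
    _ ≤ 2 * nndist p q := hge p q
    _ ≤ 2 * (1 / 16) := by gcongr
    _ < (u ^ 2) ^ (2 * k) := by rw [hquarter]; norm_num
  have hdouble (n : ℤ) (hn : n.natAbs = 2 * k) :
      (u ^ 2) ^ (2 * k) * separationGauge f V (u ^ 2) ((f ^ n) p) ((f ^ n) q) ≤
        u ^ n.natAbs * nndist ((f ^ n) p) ((f ^ n) q) := by
    rw [hquarter, hn, huk]
    calc 1 / 4 * separationGauge f V (u ^ 2) ((f ^ n) p) ((f ^ n) q)
        ≤ 1 / 4 * (2 * nndist ((f ^ n) p) ((f ^ n) q)) := by gcongr; exact hge _ _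
      _ = 1 / 2 * nndist ((f ^ n) p) ((f ^ n) q) := by rw [← mul_assoc]; norm_num
  rcases le_max_iff.1 ((hle p q).trans
    (separationGauge_le_max_of_lt_pow (pow_le_one' hu 2) hsmall)) with h | h
  · exact ⟨(2 * k : ℕ), by omega, h.trans (hdouble _ (by omega))⟩
  · exact ⟨-(2 * k : ℕ), by omega, h.trans (hdouble _ (by omega))⟩

theorem exists_selfSimilar_metricSpace (f : Equiv.Perm X) {V : Set (X × X)}
    (hrefl : ∀ x, (x, x) ∈ V) (hsymm : ∀ x y, (x, y) ∈ V → (y, x) ∈ V)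
    (hexp : ∀ x y, x ≠ y → ∃ n : ℤ, ((f ^ n) x, (f ^ n) y) ∉ V) {k : ℕ} (hk₀ : k ≠ 0)
    (hk : ∀ x y z w, (∀ i : ℤ, i.natAbs ≤ k → ((f ^ i) x, (f ^ i) y) ∈ V ∧
      ((f ^ i) y, (f ^ i) z) ∈ V ∧ ((f ^ i) z, (f ^ i) w) ∈ V) → (x, w) ∈ V) :
    ∃ u : ℝ≥0, u ≠ 0 ∧ u < 1 ∧ ∃ m : MetricSpace X,
      (∀ p q, m.dist p q ≤ separationGauge f V u p q) ∧
      ∀ p q, m.dist p q ≤ 1 / 16 →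
        max (m.dist (f p) (f q)) (m.dist (f.symm p) (f.symm q)) = (u : ℝ)⁻¹ * m.dist p q := by
  obtain ⟨u, hu₀, hu₁, huk⟩ :=
    exists_nnreal_pow_eq_of_lt_one (a := 1 / 2) (by norm_num) (by norm_num)
      (mul_ne_zero two_ne_zero hk₀)
  have hv : u ^ 2 ≤ 1 := pow_le_one' hu₁.le 2
  have hvu : u ^ 2 ≤ u := pow_le_of_le_one zero_le hu₁.le two_ne_zero
  obtain ⟨_, hD⟩ := exists_pseudoMetricSpace_nndist_le (separationGauge f V (u ^ 2))
    (separationGauge_self hrefl) (separationGauge_comm hsymm) fun x y z w => by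
      have hmax := pow_mul_separationGauge_le_max hv hk x y z w
      rwa [← pow_mul, huk, one_div, inv_mul_le_iff₀ two_pos] at hmax
  have hD₁ (x y : X) : nndist x y ≤ 1 := (hD x y).1.trans (separationGauge_le_one hv x y)
  obtain ⟨m, hm⟩ := exists_metricSpace_nndist_eq_orbitSup f hu₁.le hD₁ fun x y h =>
    eq_of_separationGauge_eq_zero (pow_ne_zero 2 hu₀) hv hexp <|
      nonpos_iff_eq_zero.1 ((hD x y).2.trans_eq (by rw [h, mul_zero]))
  refine ⟨u, hu₀, hu₁, m, fun p q => ?_, fun p q hpq => ?_⟩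
  · rw [hm]
    exact_mod_cast calc
      orbitSup f u nndist p q ≤ orbitSup f u (separationGauge f V (u ^ 2)) p q :=
        orbitSup_mono hu₁.le (separationGauge_le_one hv) (fun x y => (hD x y).1) p q
      _ ≤ separationGauge f V u p q :=
        orbitSup_orbitSup_le hu₁.le hvu (indicator_compl_one_le_one V) p q
  · simp only [hm] at hpq ⊢
    have hsmall : nndist p q ≤ 1 / 16 :=
      (le_orbitSup hu₁.le hD₁ p q).trans (NNReal.coe_le_coe.1 (by simpa using hpq))
    exact_mod_cast max_orbitSup_eq_inv_mul hu₀ hu₁.le hD₁ <|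
      exists_nndist_le_pow_mul_nndist_zpow hu₁.le huk (fun x y => (hD x y).1)
        (fun x y => (hD x y).2) hsmall

end SelfSimilarMetric

section Compact

theorem continuous_perm_zpow {X : Type*} [TopologicalSpace X] {f : Equiv.Perm X}
    (hf : Continuous f) (hf' : Continuous f.symm) (n : ℤ) : Continuous (f ^ n : Equiv.Perm X) := by
  induction n with
  | zero => exact continuous_id
  | succ n ih =>
    rw [zpow_add_one]
    exact ih.comp hf
  | pred n ih =>
    rw [zpow_sub_one]
    exact ih.comp hf'

theorem eq_of_le_of_compactSpace_of_t2Space {X : Type*} {t t' : TopologicalSpace X}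
    (ht : @CompactSpace X t) (ht' : @T2Space X t') (h : t ≤ t') : t' = t := by
  have hcont : Continuous[t, t'] id := continuous_id_iff_le.2 h
  obtain ⟨⟨⟨hind⟩, -⟩, -⟩ :=
    @Continuous.isClosedEmbedding X X t t' ht ht' id hcont Function.injective_id
  exact (hind.trans induced_id).symm

theorem le_toTopologicalSpace_of_tendsto_dist {X : Type*} {t : TopologicalSpace X}
    (m : PseudoMetricSpace X) (h : ∀ p, Tendsto (fun q => m.dist q p) (@nhds X t p) (𝓝 0)) :
    t ≤ m.toUniformSpace.toTopologicalSpace :=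
  le_of_nhds_le_nhds fun p => tendsto_id'.1 (tendsto_iff_dist_tendsto_zero.2 (h p))

variable {M : Type*} [UniformSpace M] {f : Equiv.Perm M} {V : Set (M × M)}

theorem exists_isClosed_symm_subset_of_mem_uniformity (hV : V ∈ 𝓤 M) :
    ∃ W ∈ 𝓤 M, IsClosed W ∧ (∀ x y, (x, y) ∈ W → (y, x) ∈ W) ∧ W ⊆ V := by
  obtain ⟨W, ⟨hW, hWc⟩, hWV⟩ := uniformity_hasBasis_closed.mem_iff.1 hV
  exact ⟨W ∩ Prod.swap ⁻¹' W, inter_mem hW (tendsto_swap_uniformity hW),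
    hWc.inter (hWc.preimage continuous_swap), fun _ _ h => h.symm,
    Set.inter_subset_left.trans hWV⟩

theorem exists_forall_zpow_mem_imp_mem [CompactSpace M] (hf : Continuous f)
    (hf' : Continuous f.symm) (hVc : IsClosed V)
    (hexp : ∀ x y, x ≠ y → ∃ n : ℤ, ((f ^ n) x, (f ^ n) y) ∉ V) {U : Set (M × M)} (hU : U ∈ 𝓤 M) :
    ∃ k : ℕ, ∀ x y, (∀ i : ℤ, i.natAbs ≤ k → ((f ^ i) x, (f ^ i) y) ∈ V) → (x, y) ∈ U := by
  let K (k : ℕ) : Set (M × M) := {p | ∀ i : ℤ, i.natAbs ≤ k → ((f ^ i) p.1, (f ^ i) p.2) ∈ V}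
  have hK_anti : Antitone K := fun _ _ hkl _ hp i hi => hp i (hi.trans hkl)
  have hK_closed (k : ℕ) : IsClosed (K k) := by
    simp only [K, Set.ofPred_forall]
    refine isClosed_iInter fun i => isClosed_iInter fun _ => hVc.preimage ?_
    have hfi := continuous_perm_zpow hf hf' i
    fun_prop
  have hK_diag : ∀ p ∈ ⋂ k, K k, U ∈ 𝓝 p := by
    rintro ⟨x, y⟩ hp
    obtain rfl : x = y := by
      by_contra hne
      obtain ⟨n, hn⟩ := hexp x y hne
      exact hn (Set.mem_iInter.1 hp n.natAbs n le_rfl)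
    exact nhds_le_uniformity x hU
  obtain ⟨k, hk⟩ := exists_subset_nhds_of_compactSpace hK_anti.directed_ge hK_closed hK_diag
  exact ⟨k, fun x y h => hk h⟩

theorem tendsto_separationGauge_nhds_zero (hf : Continuous f) (hf' : Continuous f.symm)
    (hV : V ∈ 𝓤 M) {u : ℝ≥0} (hu : u < 1) (p : M) :
    Tendsto (fun q => separationGauge f V u q p) (𝓝 p) (𝓝 0) := by
  refine tendsto_order.2 ⟨fun a ha => absurd ha not_lt_zero, fun ε hε => ?_⟩
  obtain ⟨s, hs⟩ := exists_pow_lt_of_lt_one hε hu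
  have hclose : ∀ᶠ q in 𝓝 p, ∀ i ∈ Finset.Icc (-s : ℤ) s, ((f ^ i) q, (f ^ i) p) ∈ V :=
    (Finset.eventually_all _).2 fun i _ =>
      (continuous_perm_zpow hf hf' i).continuousAt (mem_nhds_right _ hV)
  filter_upwards [hclose] with q hq
  refine ((separationGauge_le_iff hu.le).2 fun n hn => ?_).trans_lt hs
  have hns : n ∉ Finset.Icc (-s : ℤ) s := fun hmem => hn (hq n hmem)
  rw [Finset.mem_Icc] at hns
  exact pow_le_pow_right_of_le_one' hu.le (by omega)

end Compact

theorem stmt_0_general {M : Type*} [m : UniformSpace M] [CompactSpace M]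
    (f : Equiv.Perm M) (hf : Continuous f) (hf' : Continuous f.symm) {V : Set (M × M)}
    (hV : V ∈ 𝓤 M) (hexp : ∀ x y : M, x ≠ y → ∃ n : ℤ, ((f ^ n) x, (f ^ n) y) ∉ V) :
    ∃ m' : MetricSpace M,
      m'.toUniformSpace.toTopologicalSpace = m.toTopologicalSpace ∧
      ∃ ξ > (0 : ℝ), ∃ lam > (1 : ℝ), ∀ p q : M,
        m'.dist p q ≤ ξ →
        max (m'.dist (f p) (f q)) (m'.dist (f.symm p) (f.symm q)) = lam * m'.dist p q := by
  obtain ⟨W, hW, hWc, hWsymm, hWV⟩ := exists_isClosed_symm_subset_of_mem_uniformity hV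
  have hexpW (x y : M) (hxy : x ≠ y) : ∃ n : ℤ, ((f ^ n) x, (f ^ n) y) ∉ W :=
    (hexp x y hxy).imp fun _ => mt (@hWV _)
  obtain ⟨U, hU, hUW⟩ := comp3_mem_uniformity hW
  obtain ⟨k, hk⟩ := exists_forall_zpow_mem_imp_mem hf hf' hWc hexpW hU
  obtain ⟨u, hu₀, hu₁, m', hle, hself⟩ := exists_selfSimilar_metricSpace f
    (fun x => refl_mem_uniformity hW) hWsymm hexpW k.succ_ne_zero fun x y z w h =>
      hUW ⟨y, hk x y fun i hi => (h i (by omega)).1, z, hk y z fun i hi => (h i (by omega)).2.1,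
        hk z w fun i hi => (h i (by omega)).2.2⟩
  have htop : m.toTopologicalSpace ≤ m'.toUniformSpace.toTopologicalSpace :=
    le_toTopologicalSpace_of_tendsto_dist m'.toPseudoMetricSpace fun p =>
      squeeze_zero (fun _ => dist_nonneg) (fun q => hle q p) <|
        NNReal.tendsto_coe.2 (tendsto_separationGauge_nhds_zero hf hf' hW hu₁ p)
  exact ⟨m', eq_of_le_of_compactSpace_of_t2Space ‹_› inferInstance htop, 1 / 16, by norm_num,
    (u : ℝ)⁻¹, (one_lt_inv₀ (mod_cast hu₀.bot_lt)).2 (mod_cast hu₁), hself⟩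

/-- every expansive homeomorphism of a compact metric space admits a
compatible self-similar metric. -/
theorem stmt_0 {M : Type*} [m : MetricSpace M] [CompactSpace M]
    (f : Equiv.Perm M) (hf : Continuous f) (hf' : Continuous f.symm)
    (c : ℝ) (hc : 0 < c)
    (hexp : ∀ x y : M, x ≠ y → ∃ n : ℤ, c < dist ((f ^ n) x) ((f ^ n) y)) :
    ∃ m' : MetricSpace M,
      m'.toUniformSpace.toTopologicalSpace = m.toUniformSpace.toTopologicalSpace ∧
      ∃ ξ > (0 : ℝ), ∃ lam > (1 : ℝ), ∀ p q : M,
        m'.dist p q ≤ ξ →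
        max (m'.dist (f p) (f q)) (m'.dist (f.symm p) (f.symm q)) = lam * m'.dist p q :=
  stmt_0_general f hf hf' (Metric.dist_mem_uniformity hc) fun x y hxy =>
    (hexp x y hxy).imp fun _ h => h.not_gt
end

section
/- Let f be a homeomorphism of a compact metric space (M,d) and let d be self-similar for f with expanding factor λ > 1 and constant ξ > 0. If λ·d(x,y) ≠ d(f⁻¹(x), f⁻¹(y)), then d(fᵏ(x), fᵏ(y)) = λᵏ·d(x,y) for every integer k ≥ 0 such that λ^{k−1}·d(x,y) ≤ ξ. -/
open Filter Topology

/-!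
If `d(x, y) ≤ ξ` and the maximum in the self-similarity identity is not attained by
`d(f⁻¹ x, f⁻¹ y)`, it is attained by `d(f x, f y)`, so `f` expands the pair `(x, y)` by exactly
`lam`. Then `lam * d(f x, f y) = lam² * d(x, y) > d(x, y)`, so the maximum is not attained by the
preimages of the pair `(f x, f y)` either. Hence the expansion goes on as long as the distance
stays at most `ξ`.
-/

/-- The distance of `M` is self-similar for `f` with expanding factor `lam` and constant `ξ`. The
requirements `1 < lam` and `0 < ξ` are not part of the predicate. -/
def IsSelfSimilarDist {M : Type*} [PseudoMetricSpace M] (f : Equiv.Perm M) (lam ξ : ℝ) : Prop :=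
  ∀ p q : M, dist p q ≤ ξ →
    max (dist (f p) (f q)) (dist (f.symm p) (f.symm q)) = lam * dist p q

namespace IsSelfSimilarDist

variable {M : Type*} [PseudoMetricSpace M] {f : Equiv.Perm M} {lam ξ : ℝ} {x y : M}

theorem dist_apply_eq_of_ne (h : IsSelfSimilarDist f lam ξ) (hle : dist x y ≤ ξ)
    (hne : lam * dist x y ≠ dist (f.symm x) (f.symm y)) :
    dist (f x) (f y) = lam * dist x y :=
  (max_eq_iff.mp (h x y hle)).elim (·.1) fun hback => absurd hback.1.symm hne

theorem dist_symm_apply_le (h : IsSelfSimilarDist f lam ξ) (hle : dist x y ≤ ξ) :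
    dist (f.symm x) (f.symm y) ≤ lam * dist x y :=
  (le_max_right _ _).trans_eq (h x y hle)

theorem dist_pos_of_ne (h : IsSelfSimilarDist f lam ξ) (hle : dist x y ≤ ξ)
    (hne : lam * dist x y ≠ dist (f.symm x) (f.symm y)) : 0 < dist x y := by
  have hlt : dist (f.symm x) (f.symm y) < lam * dist x y :=
    (h.dist_symm_apply_le hle).lt_of_ne' hne
  have hpos : 0 < lam * dist x y := dist_nonneg.trans_lt hlt
  exact dist_nonneg.lt_of_ne' (right_ne_zero_of_mul hpos.ne')

theorem mul_dist_apply_ne_of_ne (h : IsSelfSimilarDist f lam ξ) (hlam : 1 < lam)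
    (hle : dist x y ≤ ξ) (hne : lam * dist x y ≠ dist (f.symm x) (f.symm y)) :
    lam * dist (f x) (f y) ≠ dist (f.symm (f x)) (f.symm (f y)) := by
  have hpos := h.dist_pos_of_ne hle hne
  rw [f.symm_apply_apply, f.symm_apply_apply, h.dist_apply_eq_of_ne hle hne]
  refine ne_of_gt ?_
  calc dist x y < lam * dist x y := lt_mul_of_one_lt_left hpos hlam
    _ < lam * (lam * dist x y) := lt_mul_of_one_lt_left (by positivity) hlam

end IsSelfSimilarDist

theorem stmt_3_general {M : Type*} [PseudoMetricSpace M] {f : Equiv.Perm M} {lam ξ : ℝ}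
    (h : IsSelfSimilarDist f lam ξ) (hlam : 1 < lam) {x y : M}
    (hne : lam * dist x y ≠ dist (f.symm x) (f.symm y)) (k : ℕ)
    (hk : lam ^ ((k : ℤ) - 1) * dist x y ≤ ξ) :
    dist ((f ^ k) x) ((f ^ k) y) = lam ^ k * dist x y := by
  induction k generalizing x y with
  | zero => simp
  | succ k ih =>
    rw [Nat.cast_succ, add_sub_cancel_right, zpow_natCast] at hk
    have hle : dist x y ≤ ξ :=
      (le_mul_of_one_le_left dist_nonneg (one_le_pow₀ hlam.le)).trans hk
    have hexp : dist (f x) (f y) = lam * dist x y := h.dist_apply_eq_of_ne hle hne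
    have hk' : lam ^ ((k : ℤ) - 1) * dist (f x) (f y) ≤ ξ := by
      rwa [hexp, ← mul_assoc, ← zpow_add_one₀ (by positivity), sub_add_cancel, zpow_natCast]
    calc dist ((f ^ (k + 1)) x) ((f ^ (k + 1)) y)
        = dist ((f ^ k) (f x)) ((f ^ k) (f y)) := by simp only [pow_succ, Equiv.Perm.mul_apply]
      _ = lam ^ k * dist (f x) (f y) := ih (h.mul_dist_apply_ne_of_ne hlam hle hne) hk'
      _ = lam ^ (k + 1) * dist x y := by rw [hexp, pow_succ, mul_assoc]

theorem stmt_3 {M : Type*} [MetricSpace M] [CompactSpace M]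
    (f : Equiv.Perm M) (hf : Continuous f) (hf' : Continuous f.symm)
    (ξ lam : ℝ) (hξ : 0 < ξ) (hlam : 1 < lam)
    (hss : ∀ p q : M, dist p q ≤ ξ →
      max (dist (f p) (f q)) (dist (f.symm p) (f.symm q)) = lam * dist p q)
    (x y : M) (hxy : lam * dist x y ≠ dist (f.symm x) (f.symm y)) :
    ∀ k : ℕ, lam ^ ((k : ℤ) - 1) * dist x y ≤ ξ →
      dist ((f ^ k) x) ((f ^ k) y) = lam ^ k * dist x y :=
  stmt_3_general hss hlam hxy
end

section
/- Let f be an expansive homeomorphism of a compact metric space (M,d) with expansivity constant ξ, where d is self-similar for f with expanding factor λ > 1 and constant ξ. Then for all ε > 0 there is δ > 0 such that if (x,y,z) is a dynamical triangle and d(x,y) < δ, then max{d(x,z), d(y,z)} < ε. -/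
open Filter Topology

/-!
Along a stable pair the distances `dₙ = d(fⁿ y, fⁿ z)` are bounded and satisfy
`λ dₙ₊₁ ≤ max dₙ dₙ₊₂`, so a maximum principle makes `f` contract the pair by the factor `λ`;
self-similarity then makes `f⁻¹` expand it by `λ`. In a dynamical triangle, comparing `f x`, `f y`
and `f z` gives `λ² d(x, z) ≤ λ² d(x, y) + d(y, z)`, and `f⁻¹` gives the same inequality with `x`
and `y` exchanged. Hence both `d(x, z)` and `d(y, z)` are at most `λ² / (λ² - 1) * d(x, y)`.
-/

theorem mul_apply_one_le_apply_zero {u : ℕ → ℝ} {c : ℝ} (hc : 1 < c)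
    (hbdd : BddAbove (Set.range u)) (hzero : 0 ≤ u 0)
    (hmax : ∀ n, c * u (n + 1) ≤ max (u n) (u (n + 2))) : c * u 1 ≤ u 0 := by
  have le_sup (n : ℕ) : u n ≤ ⨆ k, u k := le_ciSup hbdd n
  have mul_succ_le_sup (n : ℕ) : c * u (n + 1) ≤ ⨆ k, u k :=
    (hmax n).trans (max_le (le_sup n) (le_sup (n + 2)))
  have sup_le_max : ⨆ k, u k ≤ max (u 0) ((⨆ k, u k) / c) := by
    refine ciSup_le fun n => ?_
    cases n with
    | zero => exact le_max_left _ _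
    | succ n => exact le_max_of_le_right ((le_div_iff₀' (by linarith)).2 (mul_succ_le_sup n))
  have sup_le : ⨆ k, u k ≤ u 0 := by
    rcases le_max_iff.1 sup_le_max with h | h
    · exact h
    · have sup_nonpos : ⨆ k, u k ≤ 0 := by
        by_contra! sup_pos
        exact h.not_gt (div_lt_self sup_pos hc)
      exact sup_nonpos.trans hzero
  exact (mul_succ_le_sup 0).trans sup_le

section SelfSimilar

variable {M : Type*} [PseudoMetricSpace M] {f : Equiv.Perm M} {ξ lam : ℝ} {x y z : M}

/-- The metric of `M` is self-similar for `f`, with constant `ξ` and expanding factor `lam`.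
The conditions `0 < ξ` and `1 < lam` are not part of the definition. -/
def IsSelfSimilar (f : Equiv.Perm M) (ξ lam : ℝ) : Prop :=
  ∀ p q : M, dist p q ≤ ξ →
    max (dist (f p) (f q)) (dist (f.symm p) (f.symm q)) = lam * dist p q

/-- The local stable set `W^s_ε(x)` of `f`. The local unstable set `W^u_ε(x)` is the local stable
set of `f.symm`. -/
def localStableSet (f : Equiv.Perm M) (ε : ℝ) (x : M) : Set M :=
  {y | ∀ n : ℕ, dist ((f ^ n) x) ((f ^ n) y) ≤ ε}

theorem localStableSet_mono {r s : ℝ} (hrs : r ≤ s) :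
    localStableSet f r x ⊆ localStableSet f s x :=
  fun _ hy n => (hy n).trans hrs

namespace IsSelfSimilar

theorem symm (hf : IsSelfSimilar f ξ lam) : IsSelfSimilar f.symm ξ lam :=
  fun p q hpq => (max_comm _ _).trans (hf p q hpq)

theorem dist_map_le (hf : IsSelfSimilar f ξ lam) (hxy : dist x y ≤ ξ) :
    dist (f x) (f y) ≤ lam * dist x y :=
  (le_max_left _ _).trans_eq (hf x y hxy)

theorem mul_dist_map_le (hf : IsSelfSimilar f ξ lam) (hlam : 1 < lam)
    (hz : z ∈ localStableSet f ξ y) : lam * dist (f y) (f z) ≤ dist y z := by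
  have hbdd : BddAbove (Set.range fun n => dist ((f ^ n) y) ((f ^ n) z)) :=
    ⟨ξ, Set.forall_mem_range.2 hz⟩
  refine mul_apply_one_le_apply_zero (u := fun n => dist ((f ^ n) y) ((f ^ n) z))
    hlam hbdd dist_nonneg fun n => ?_
  have map_succ (w : M) : f ((f ^ (n + 1)) w) = (f ^ (n + 2)) w := by
    rw [pow_succ' f (n + 1), Equiv.Perm.mul_apply]
  have symm_succ (w : M) : f.symm ((f ^ (n + 1)) w) = (f ^ n) w := by
    rw [pow_succ', Equiv.Perm.mul_apply, f.symm_apply_apply]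
  have selfSimilarity := hf _ _ (hz (n + 1))
  rw [map_succ, map_succ, symm_succ, symm_succ, max_comm] at selfSimilarity
  exact selfSimilarity.ge

theorem mul_dist_le_dist_symm (hf : IsSelfSimilar f ξ lam) (hlam : 1 < lam)
    (hz : z ∈ localStableSet f ξ y) : lam * dist y z ≤ dist (f.symm y) (f.symm z) := by
  have contraction := hf.mul_dist_map_le hlam hz
  rcases le_max_iff.1 (hf y z (hz 0)).ge with hforward | hbackward
  · have not_expanded : dist (f y) (f z) ≤ dist y z :=
      (le_mul_of_one_le_left dist_nonneg hlam.le).trans contraction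
    have dist_nonpos : dist y z ≤ 0 := by nlinarith
    calc lam * dist y z ≤ 0 := mul_nonpos_of_nonneg_of_nonpos (by linarith) dist_nonpos
      _ ≤ dist (f.symm y) (f.symm z) := dist_nonneg
  · exact hbackward

theorem sq_mul_dist_le (hf : IsSelfSimilar f ξ lam) (hlam : 1 < lam)
    (hxz : z ∈ localStableSet f.symm ξ x) (hyz : z ∈ localStableSet f ξ y)
    (hxy : dist x y ≤ ξ) : lam ^ 2 * dist x z ≤ lam ^ 2 * dist x y + dist y z := by
  have : 0 ≤ lam := by linarith
  calc lam ^ 2 * dist x z = lam * (lam * dist x z) := by ring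
    _ ≤ lam * dist (f x) (f z) := by
      gcongr
      exact hf.symm.mul_dist_le_dist_symm hlam hxz
    _ ≤ lam * (dist (f x) (f y) + dist (f y) (f z)) := by
      gcongr
      exact dist_triangle _ _ _
    _ = lam * dist (f x) (f y) + lam * dist (f y) (f z) := mul_add _ _ _
    _ ≤ lam * (lam * dist x y) + dist y z := by
      gcongr
      · exact hf.dist_map_le hxy
      · exact hf.mul_dist_map_le hlam hyz
    _ = lam ^ 2 * dist x y + dist y z := by ring

theorem max_dist_le (hf : IsSelfSimilar f ξ lam) (hlam : 1 < lam)
    (hxz : z ∈ localStableSet f.symm ξ x) (hyz : z ∈ localStableSet f ξ y)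
    (hxy : dist x y ≤ ξ) :
    max (dist x z) (dist y z) ≤ lam ^ 2 / (lam ^ 2 - 1) * dist x y := by
  have hlam_sq : 0 < lam ^ 2 - 1 := sub_pos.2 (one_lt_pow₀ hlam two_ne_zero)
  have hx := hf.sq_mul_dist_le hlam hxz hyz hxy
  have hy := hf.symm.sq_mul_dist_le hlam hyz hxz (by rwa [dist_comm])
  rw [dist_comm y x] at hy
  rw [div_mul_eq_mul_div, le_div_iff₀' hlam_sq]
  rcases max_cases (dist x z) (dist y z) with ⟨hmax, _⟩ | ⟨hmax, _⟩ <;> rw [hmax] <;> linarith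

end IsSelfSimilar

end SelfSimilar

theorem stmt_5_general {M : Type*} [PseudoMetricSpace M] {f : Equiv.Perm M} {ξ lam : ℝ}
    (hξ : 0 < ξ) (hlam : 1 < lam) (hf : IsSelfSimilar f ξ lam) :
    ∀ ε > (0 : ℝ), ∃ δ > (0 : ℝ), ∀ x y z : M,
      z ∈ localStableSet f.symm ξ x → z ∈ localStableSet f ξ y →
      dist x y < δ → max (dist x z) (dist y z) < ε := by
  intro ε hε
  have hlam_sq : 1 < lam ^ 2 := one_lt_pow₀ hlam two_ne_zero
  have hC : 0 < lam ^ 2 / (lam ^ 2 - 1) := div_pos (by linarith) (by linarith)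
  refine ⟨min ξ (ε / (lam ^ 2 / (lam ^ 2 - 1))), lt_min hξ (div_pos hε hC),
    fun x y z hxz hyz hxy => ?_⟩
  obtain ⟨hxyξ, hxyε⟩ := lt_min_iff.1 hxy
  exact (hf.max_dist_le hlam hxz hyz hxyξ.le).trans_lt ((lt_div_iff₀' hC).1 hxyε)

theorem stmt_5 {M : Type*} [MetricSpace M] [CompactSpace M]
    (f : Equiv.Perm M) (hf : Continuous f) (hf' : Continuous f.symm)
    (ξ lam : ℝ) (hξ : 0 < ξ) (hlam : 1 < lam)
    (hexp : ∀ x y : M, x ≠ y → ∃ n : ℤ, ξ < dist ((f ^ n) x) ((f ^ n) y))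
    (hss : ∀ p q : M, dist p q ≤ ξ →
      max (dist (f p) (f q)) (dist (f.symm p) (f.symm q)) = lam * dist p q) :
    ∀ ε > (0 : ℝ), ∃ δ > (0 : ℝ), ∀ x y z : M,
      (∀ n : ℕ, dist ((f.symm ^ n) x) ((f.symm ^ n) z) ≤ ξ / (2 * lam)) →
      (∀ n : ℕ, dist ((f ^ n) y) ((f ^ n) z) ≤ ξ / (2 * lam)) →
      dist x y < δ → max (dist x z) (dist y z) < ε := by
  have hr : ξ / (2 * lam) ≤ ξ := div_le_self hξ.le (by linarith)
  intro ε hε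
  obtain ⟨δ, hδ, h⟩ := stmt_5_general hξ hlam hss ε hε
  exact ⟨δ, hδ, fun x y z hxz hyz =>
    h x y z (localStableSet_mono hr hxz) (localStableSet_mono hr hyz)⟩
end

section
/- Let f be an expansive homeomorphism of a compact metric space (M,d) with expansivity constant ξ, where d is self-similar for f with expanding factor λ > 1 and constant ξ. Then ent⁺(M) = ent⁻(M) = ent(M)/2. -/
open Filter Topology

/-- Diameter of a set with respect to an arbitrary "metric" `ρ`. -/
noncomputable def rdiam {M : Type*} (ρ : M → M → ℝ) (A : Set M) : ℝ :=
  sSup {r : ℝ | ∃ a ∈ A, ∃ b ∈ A, r = ρ a b}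

/-- Minimal cardinality of a finite cover of `X` by sets of `ρ`-diameter `< ε`. -/
noncomputable def covN {M : Type*} (X : Set M) (ρ : M → M → ℝ) (ε : ℝ) : ℕ :=
  sInf {n : ℕ | ∃ U : Fin n → Set M, X ⊆ (⋃ i, U i) ∧ ∀ i, rdiam ρ (U i) < ε}

/-- `dᶠₙ(x,y) = max_{|k| ≤ n} d(fᵏ x, fᵏ y)`. -/
noncomputable def dFn {M : Type*} [MetricSpace M] (f : Equiv.Perm M) (n : ℕ) (x y : M) : ℝ :=
  sSup {r : ℝ | ∃ k : ℤ, |k| ≤ (n : ℤ) ∧ r = dist ((f ^ k) x) ((f ^ k) y)}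

/-- `d⁺ₙ(x,y) = max_{0 ≤ k ≤ n} d(fᵏ x, fᵏ y)`. -/
noncomputable def dPlusn {M : Type*} [MetricSpace M] (f : Equiv.Perm M) (n : ℕ) (x y : M) : ℝ :=
  sSup {r : ℝ | ∃ k : ℕ, k ≤ n ∧ r = dist ((f ^ k) x) ((f ^ k) y)}

/-- `d⁻ₙ(x,y) = max_{0 ≤ k ≤ n} d(f⁻ᵏ x, f⁻ᵏ y)`. -/
noncomputable def dMinusn {M : Type*} [MetricSpace M] (f : Equiv.Perm M) (n : ℕ) (x y : M) : ℝ :=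
  sSup {r : ℝ | ∃ k : ℕ, k ≤ n ∧ r = dist ((f.symm ^ k) x) ((f.symm ^ k) y)}

/-!
Translating time by `n` turns the window `|k| ≤ n` into `0 ≤ k ≤ 2n` and the window `-n ≤ k ≤ 0`
into `0 ≤ k ≤ n`, and pulling a cover back along `fⁿ` realises this translation. Hence the
covering numbers of `dᶠₙ` and `d⁺₂ₙ` agree, as do those of `d⁻ₙ` and `d⁺ₙ`. With `L n` the
logarithm of the covering number of `d⁺ₙ`, the hypothesis says `L (2n) / n → E`, and since `L` is
monotone the limit along even times determines the limit along all times.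
-/

open scoped Uniformity

section Covering

variable {M N : Type*}

theorem rdiam_comp_equiv (e : M ≃ N) (ρ : N → N → ℝ) (A : Set N) :
    rdiam (fun x y => ρ (e x) (e y)) (e ⁻¹' A) = rdiam ρ A := by
  simp only [rdiam, Set.mem_preimage, e.exists_congr_left, Equiv.apply_symm_apply]

theorem covN_comp_equiv (e : M ≃ N) (ρ : N → N → ℝ) (X : Set N) (ε : ℝ) :
    covN (e ⁻¹' X) (fun x y => ρ (e x) (e y)) ε = covN X ρ ε := by
  unfold covN
  congr 1
  ext n
  constructor
  · rintro ⟨U, hXU, hU⟩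
    refine ⟨fun i => e.symm ⁻¹' U i, ?_, fun i => ?_⟩
    · simpa only [← Set.preimage_iUnion, ← e.image_symm_eq_preimage, Set.image_subset_iff]
        using hXU
    · simpa only [← rdiam_comp_equiv e, ← Set.preimage_comp, e.symm_comp_self, Set.preimage_id]
        using hU i
  · rintro ⟨U, hXU, hU⟩
    refine ⟨fun i => e ⁻¹' U i, ?_, fun i => (rdiam_comp_equiv e ρ (U i)).trans_lt (hU i)⟩
    rw [← Set.preimage_iUnion]
    exact Set.preimage_mono hXU

theorem rdiam_le {ρ : M → M → ℝ} {A : Set M} {C : ℝ} (hC : 0 ≤ C)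
    (h : ∀ a ∈ A, ∀ b ∈ A, ρ a b ≤ C) : rdiam ρ A ≤ C := by
  refine Real.sSup_le ?_ hC
  rintro _ ⟨a, ha, b, hb, rfl⟩
  exact h a ha b hb

theorem rdiam_mono {ρ ρ' : M → M → ℝ} {A : Set M} {C : ℝ}
    (hle : ∀ a ∈ A, ∀ b ∈ A, ρ a b ≤ ρ' a b) (hC : ∀ a ∈ A, ∀ b ∈ A, ρ' a b ≤ C) :
    rdiam ρ A ≤ rdiam ρ' A := by
  rcases A.eq_empty_or_nonempty with rfl | ⟨a, ha⟩
  · simp [rdiam]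
  · refine csSup_le ⟨_, a, ha, a, ha, rfl⟩ ?_
    rintro _ ⟨x, hx, y, hy, rfl⟩
    refine (hle x hx y hy).trans (le_csSup ⟨C, ?_⟩ ⟨x, hx, y, hy, rfl⟩)
    rintro _ ⟨a, ha, b, hb, rfl⟩
    exact hC a ha b hb

theorem exists_fin_cover_rdiam_lt [UniformSpace M] {X : Set M}
    (hX : TotallyBounded X) {ρ : M → M → ℝ} {δ ε : ℝ} (hδ : 0 ≤ δ) (hδε : δ < ε)
    (hρ : ∀ᶠ p in 𝓤 M, ρ p.1 p.2 ≤ δ) :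
    ∃ n, ∃ U : Fin n → Set M, X ⊆ (⋃ i, U i) ∧ ∀ i, rdiam ρ (U i) < ε := by
  obtain ⟨V, hV, hVsymm, hVρ⟩ := comp_symm_mem_uniformity_sets hρ
  obtain ⟨t, ht, hXt⟩ := hX V hV
  obtain ⟨n, c, -, rfl⟩ := ht.fin_param
  refine ⟨n, fun i => {x | (x, c i) ∈ V}, by simpa using hXt, fun i => ?_⟩
  refine (rdiam_le hδ fun a ha b (hb : (b, c i) ∈ V) => ?_).trans_lt hδε
  exact hVρ (SetRel.prodMk_mem_comp ha (SetRel.symm V hb))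

end Covering

section Window

variable {M : Type*} [PseudoMetricSpace M]

/-- The dynamical metric `max_{k ∈ I} d(fᵏ x, fᵏ y)` of a set `I` of times, which puts `dᶠₙ`, `d⁺ₙ`
and `d⁻ₙ` into one family. It is meant for finite `I`, or for bounded `M`: an unbounded supremum
is `0`. -/
noncomputable def windowDist (f : Equiv.Perm M) (I : Set ℤ) (x y : M) : ℝ :=
  sSup ((fun k : ℤ => dist ((f ^ k) x) ((f ^ k) y)) '' I)

variable {f : Equiv.Perm M} {I J : Set ℤ}

theorem windowDist_le {x y : M} {C : ℝ} (hC : 0 ≤ C)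
    (h : ∀ k ∈ I, dist ((f ^ k) x) ((f ^ k) y) ≤ C) : windowDist f I x y ≤ C :=
  Real.sSup_le (Set.forall_mem_image.2 h) hC

theorem windowDist_mono (hJ : J.Finite) (hIJ : I ⊆ J) (x y : M) :
    windowDist f I x y ≤ windowDist f J x y :=
  windowDist_le (Real.sSup_nonneg (Set.forall_mem_image.2 fun _ _ => dist_nonneg)) fun _ hk =>
    le_csSup (hJ.image _).bddAbove (Set.mem_image_of_mem _ (hIJ hk))

theorem windowDist_le_diam_univ [BoundedSpace M] (f : Equiv.Perm M) (I : Set ℤ) (x y : M) :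
    windowDist f I x y ≤ Metric.diam (Set.univ : Set M) :=
  windowDist_le Metric.diam_nonneg fun _ _ =>
    Metric.dist_le_diam_of_mem (Bornology.IsBounded.all _) (Set.mem_univ _) (Set.mem_univ _)

theorem windowDist_zpow_apply (f : Equiv.Perm M) (I : Set ℤ) (c : ℤ) (x y : M) :
    windowDist f I ((f ^ c) x) ((f ^ c) y) = windowDist f ((· + c) '' I) x y := by
  simp only [windowDist, Set.image_image, zpow_add, Equiv.Perm.mul_apply]

theorem covN_windowDist_image_add (f : Equiv.Perm M) (I : Set ℤ) (c : ℤ) (X : Set M) (ε : ℝ) :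
    covN (⇑(f ^ c) ⁻¹' X) (windowDist f ((· + c) '' I)) ε = covN X (windowDist f I) ε := by
  simpa only [windowDist_zpow_apply] using covN_comp_equiv (f ^ c) (windowDist f I) X ε

theorem eventually_windowDist_le (hI : I.Finite) (hf : ∀ k ∈ I, UniformContinuous ⇑(f ^ k))
    {δ : ℝ} (hδ : 0 < δ) : ∀ᶠ p in 𝓤 M, windowDist f I p.1 p.2 ≤ δ := by
  have hclose : ∀ᶠ p in 𝓤 M, ∀ k ∈ I, dist ((f ^ k) p.1) ((f ^ k) p.2) < δ :=
    (eventually_all_finite hI).2 fun k hk => hf k hk (Metric.dist_mem_uniformity hδ)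
  filter_upwards [hclose] with p hp
  exact windowDist_le hδ.le fun k hk => (hp k hk).le

theorem covN_windowDist_mono [BoundedSpace M] {X : Set M} (hX : TotallyBounded X)
    (hJ : J.Finite) (hf : ∀ k ∈ J, UniformContinuous ⇑(f ^ k)) (hIJ : I ⊆ J)
    {ε : ℝ} (hε : 0 < ε) :
    covN X (windowDist f I) ε ≤ covN X (windowDist f J) ε := by
  obtain ⟨U, hXU, hU⟩ := Nat.sInf_mem (exists_fin_cover_rdiam_lt hX (half_pos hε).le
    (half_lt_self hε) (eventually_windowDist_le hJ hf (half_pos hε)))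
  have hle (i) : rdiam (windowDist f I) (U i) ≤ rdiam (windowDist f J) (U i) :=
    rdiam_mono (fun x _ y _ => windowDist_mono hJ hIJ x y)
      fun x _ y _ => windowDist_le_diam_univ f J x y
  exact Nat.sInf_le ⟨U, hXU, fun i => (hle i).trans_lt (hU i)⟩

end Window

theorem preimage_zpow_natCast_eq {α : Type*} {f : Equiv.Perm α} {X : Set α} (hX : f ⁻¹' X = X)
    (n : ℕ) : ⇑(f ^ (n : ℤ)) ⁻¹' X = X := by
  rw [zpow_natCast, ← Equiv.Perm.iterate_eq_pow, Set.preimage_iterate_eq,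
    Function.iterate_fixed hX]

section Entropy

variable {M : Type*} [MetricSpace M] {f : Equiv.Perm M} {X : Set M}

theorem dFn_eq_windowDist (f : Equiv.Perm M) (n : ℕ) :
    dFn f n = windowDist f (Set.Icc (-n) n) := by
  ext x y
  simp only [dFn, windowDist, Set.image, Set.mem_Icc, abs_le, eq_comm]

theorem dPlusn_eq_windowDist (f : Equiv.Perm M) (n : ℕ) :
    dPlusn f n = windowDist f (Set.Icc 0 n) := by
  ext x y
  unfold dPlusn windowDist
  congr 1
  ext r
  constructor
  · rintro ⟨k, hk, rfl⟩
    exact ⟨k, by simpa using hk, by simp only [zpow_natCast]⟩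
  · rintro ⟨k, ⟨hk, hkn⟩, rfl⟩
    lift k to ℕ using hk
    exact ⟨k, by simpa using hkn, by simp only [zpow_natCast]⟩

theorem dMinusn_eq_windowDist (f : Equiv.Perm M) (n : ℕ) :
    dMinusn f n = windowDist f (Set.Icc (-n) 0) := by
  have hwindow : Set.Icc (-n : ℤ) 0 = Neg.neg '' Set.Icc (0 : ℤ) n := by simp
  ext x y
  rw [show dMinusn f n = dPlusn f⁻¹ n from rfl, dPlusn_eq_windowDist, hwindow]
  simp only [windowDist, Set.image_image, zpow_neg, inv_zpow]

theorem covN_dPlusn_two_mul (hX : f ⁻¹' X = X) (n : ℕ) (ε : ℝ) :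
    covN X (dPlusn f (2 * n)) ε = covN X (dFn f n) ε := by
  have hshift := covN_windowDist_image_add f (Set.Icc (-n) n) n X ε
  rw [preimage_zpow_natCast_eq hX, Set.image_add_const_Icc, neg_add_cancel, ← two_mul] at hshift
  rw [dPlusn_eq_windowDist, dFn_eq_windowDist, ← hshift, Nat.cast_mul, Nat.cast_ofNat]

theorem covN_dPlusn_eq_covN_dMinusn (hX : f ⁻¹' X = X) (n : ℕ) (ε : ℝ) :
    covN X (dPlusn f n) ε = covN X (dMinusn f n) ε := by
  have hshift := covN_windowDist_image_add f (Set.Icc (-n) 0) n X ε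
  rw [preimage_zpow_natCast_eq hX, Set.image_add_const_Icc, neg_add_cancel, zero_add] at hshift
  rw [dPlusn_eq_windowDist, dMinusn_eq_windowDist, hshift]

theorem monotone_covN_dPlusn [BoundedSpace M] (hX : TotallyBounded X) (hf : UniformContinuous f)
    {ε : ℝ} (hε : 0 < ε) : Monotone fun n => covN X (dPlusn f n) ε := by
  intro m n hmn
  simp only [dPlusn_eq_windowDist]
  refine covN_windowDist_mono hX (Set.finite_Icc _ _) ?_
    (Set.Icc_subset_Icc_right (Int.ofNat_le.2 hmn)) hε
  rintro k ⟨hk, -⟩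
  lift k to ℕ using hk
  rw [zpow_natCast, ← Equiv.Perm.iterate_eq_pow]
  exact hf.iterate _ k

end Entropy

theorem monotone_log_natCast : Monotone fun n : ℕ => Real.log n := by
  intro m n hmn
  rcases m.eq_zero_or_pos with rfl | hm
  · simpa using Real.log_natCast_nonneg n
  · exact Real.log_le_log (Nat.cast_pos.2 hm) (Nat.cast_le.2 hmn)

theorem tendsto_div_of_monotone_of_tendsto_mul {u : ℕ → ℝ} (hu : Monotone u) {q : ℕ}
    (hq : 0 < q) {l : ℝ} (h : Tendsto (fun n : ℕ => u (q * n) / n) atTop (𝓝 l)) :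
    Tendsto (fun n : ℕ => u n / n) atTop (𝓝 (l / q)) := by
  refine tendsto_div_of_monotone_of_exists_subseq_tendsto_div u _ hu fun a ha =>
    ⟨(q * ·), ?_, tendsto_id.const_mul_atTop' hq, ?_⟩
  · have hgap : ∀ᶠ n : ℕ in atTop, 1 ≤ (a - 1) * n :=
      (tendsto_natCast_atTop_atTop.const_mul_atTop (sub_pos.2 ha)).eventually_ge_atTop 1
    filter_upwards [hgap] with n hn
    calc ((q * (n + 1) : ℕ) : ℝ) = q * (n + 1) := by push_cast; rfl
      _ ≤ q * (a * n) := by gcongr; linarith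
      _ = a * (q * n : ℕ) := by push_cast; ring
  · refine (h.div_const (q : ℝ)).congr fun n => ?_
    rw [div_div, Nat.cast_mul, mul_comm (n : ℝ)]

theorem stmt_11_general {M : Type*} [MetricSpace M] [BoundedSpace M] {X : Set M}
    (hX : TotallyBounded X) {f : Equiv.Perm M} (hf : UniformContinuous f) (hfX : f ⁻¹' X = X)
    {ξ : ℝ} (hξ : 0 < ξ) {E : ℝ}
    (hE : Tendsto (fun n : ℕ => Real.log (covN X (dFn f n) ξ) / n) atTop (𝓝 E)) :
    Tendsto (fun n : ℕ => Real.log (covN X (dPlusn f n) ξ) / n) atTop (𝓝 (E / 2)) ∧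
    Tendsto (fun n : ℕ => Real.log (covN X (dMinusn f n) ξ) / n) atTop (𝓝 (E / 2)) := by
  have hmono : Monotone fun n => Real.log (covN X (dPlusn f n) ξ) :=
    monotone_log_natCast.comp (monotone_covN_dPlusn hX hf hξ)
  have hplus : Tendsto (fun n : ℕ => Real.log (covN X (dPlusn f n) ξ) / n) atTop (𝓝 (E / 2)) :=
    tendsto_div_of_monotone_of_tendsto_mul hmono two_pos <| by
      simpa only [covN_dPlusn_two_mul hfX] using hE
  exact ⟨hplus, by simpa only [covN_dPlusn_eq_covN_dMinusn hfX] using hplus⟩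

theorem stmt_11 {M : Type*} [MetricSpace M] [CompactSpace M]
    (f : Equiv.Perm M) (hf : Continuous f) (hf' : Continuous f.symm)
    (ξ lam : ℝ) (hξ : 0 < ξ) (hlam : 1 < lam)
    (hexp : ∀ x y : M, x ≠ y → ∃ n : ℤ, ξ < dist ((f ^ n) x) ((f ^ n) y))
    (hss : ∀ p q : M, dist p q ≤ ξ →
      max (dist (f p) (f q)) (dist (f.symm p) (f.symm q)) = lam * dist p q)
    (E : ℝ)
    (hE : Tendsto (fun n : ℕ =>
        Real.log ((covN (Set.univ : Set M) (dFn f n) ξ : ℕ) : ℝ) / (n : ℝ)) atTop (𝓝 E)) :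
    Tendsto (fun n : ℕ =>
        Real.log ((covN (Set.univ : Set M) (dPlusn f n) ξ : ℕ) : ℝ) / (n : ℝ)) atTop (𝓝 (E / 2)) ∧
    Tendsto (fun n : ℕ =>
        Real.log ((covN (Set.univ : Set M) (dMinusn f n) ξ : ℕ) : ℝ) / (n : ℝ)) atTop (𝓝 (E / 2)) := by
  exact stmt_11_general isCompact_univ.totallyBounded
    (CompactSpace.uniformContinuous_of_continuous hf) Set.preimage_univ hξ hE
end
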